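/- Corollary (global conservation of filtered DG schemes on a periodic mesh). Under the hypotheses of Theorem 2 applied to every element of a periodic mesh — i.e., p ≥ 0, N ≥ 1, B a bilinear form on P_p with B(w, v) = 0 for every w ∈ P_p and every constant v, and polynomials u_k(t), f_k(t) ∈ P_p (k ∈ ℤ/Nℤ) with time derivatives u̇_k(t) and shared interface flux values F_k(t) ∈ ℝ satisfying, for all t, k and all v ∈ P_p, ∫_{−1}^{1} u̇_k v dξ + B(u̇_k, v) = −∫_{−1}^{1} (∂_ξ f_k) v dξ + (f_k(1,t) − F_k(t))·v(1) − (f_k(−1,t) − F_{k−1}(t))·v(−1) — the total mass is exactly conserved: d/dt Σ_{k ∈ ℤ/Nℤ} ∫_{−1}^{1} u_k(ξ,t) dξ = 0 for all t. -/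

import Mathlib

/-!
Testing the scheme on an element against `v = 1` kills the filter term `B (udot t k) 1`, and the
fundamental theorem of calculus cancels the volume term `∫ ∂_ξ f_k` against the interior boundary
values of `f_k`. What remains is `∫ udot_k = F_{k-1} - F_k` (`fdg_element_conservation`), whose sum
over the periodic mesh vanishes because `k ↦ k - 1` permutes `ZMod N`. The degree bound makes each
mass a fixed finite linear combination of coefficients, so the time derivative may be taken under
the integral (`hasDerivAt_integral_eval`).
-/

open Polynomial intervalIntegral

/-- The integral of a polynomial of degree at most `p` is a linear combination of its first `p + 1`
coefficients, with weights independent of the polynomial. -/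
lemma integral_eval_eq_sum_coeff (p : ℕ) (q : Polynomial ℝ) (hq : q.degree ≤ p) :
    ∫ ξ in (-1:ℝ)..1, q.eval ξ
      = ∑ n ∈ Finset.range (p + 1), q.coeff n * ∫ ξ in (-1:ℝ)..1, ξ ^ n := by
  have hlt : q.natDegree < p + 1 := Nat.lt_succ_of_le (natDegree_le_of_degree_le hq)
  simp_rw [eval_eq_sum_range' hlt]
  rw [intervalIntegral.integral_finsetSum]
  · simp_rw [intervalIntegral.integral_const_mul]
  · intro n _
    exact Continuous.intervalIntegrable (by fun_prop) _ _

lemma hasDerivAt_integral_eval (p : ℕ) (q : ℝ → Polynomial ℝ) (q' : Polynomial ℝ) (t : ℝ)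
    (hq : ∀ s, (q s).degree ≤ p) (hq' : q'.degree ≤ p)
    (hderiv : ∀ n, HasDerivAt (fun s => (q s).coeff n) (q'.coeff n) t) :
    HasDerivAt (fun s => ∫ ξ in (-1:ℝ)..1, (q s).eval ξ) (∫ ξ in (-1:ℝ)..1, q'.eval ξ) t := by
  rw [integral_eval_eq_sum_coeff p q' hq']
  simp_rw [fun s => integral_eval_eq_sum_coeff p (q s) (hq s)]
  exact HasDerivAt.fun_sum fun n _ => (hderiv n).mul_const _

/-- Element-wise conservation: if the scheme holds for the test function `1`, then the rate of
change of the mass of an element is the inflow `Fl` through its left interface minus the outflow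
`Fr` through its right interface. -/
lemma fdg_element_conservation (w g : Polynomial ℝ) (b Fl Fr : ℝ) (hb : b = 0)
    (h : (∫ ξ in (-1:ℝ)..1, w.eval ξ * (C 1 : Polynomial ℝ).eval ξ) + b =
        - (∫ ξ in (-1:ℝ)..1, (derivative g).eval ξ * (C 1 : Polynomial ℝ).eval ξ)
          + (g.eval 1 - Fr) * (C 1 : Polynomial ℝ).eval 1
          - (g.eval (-1) - Fl) * (C 1 : Polynomial ℝ).eval (-1)) :
    ∫ ξ in (-1:ℝ)..1, w.eval ξ = Fl - Fr := by
  have hftc : ∫ ξ in (-1:ℝ)..1, (derivative g).eval ξ = g.eval 1 - g.eval (-1) :=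
    intervalIntegral.integral_eq_sub_of_hasDerivAt (fun x _ => g.hasDerivAt x)
      ((derivative g).continuous.intervalIntegrable _ _)
  simp only [eval_C, mul_one, hftc, hb] at h
  linarith

/-- **Corollary (global conservation of filtered DG schemes on a periodic mesh).**
Under the hypotheses of the element-wise conservation theorem applied to every element
of a periodic mesh of `N` elements (with shared interface fluxes `F_k`), the total
mass `Σ_k ∫ u_k` is exactly conserved: its time derivative vanishes. -/
theorem fdg_global_conservation
    (p N : ℕ) [NeZero N] (hN : 1 ≤ N)
    (B : Polynomial ℝ →ₗ[ℝ] Polynomial ℝ →ₗ[ℝ] ℝ)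
    (hBconst : ∀ w : Polynomial ℝ, w.degree ≤ p → ∀ c : ℝ, B w (Polynomial.C c) = 0)
    (u udot f : ℝ → ZMod N → Polynomial ℝ)
    (hdeg : ∀ t k, (u t k).degree ≤ p)
    (hdegdot : ∀ t k, (udot t k).degree ≤ p)
    (hdegf : ∀ t k, (f t k).degree ≤ p)
    (hderiv : ∀ (k : ZMod N) (n : ℕ) (t : ℝ),
      HasDerivAt (fun s => (u s k).coeff n) ((udot t k).coeff n) t)
    (F : ℝ → ZMod N → ℝ)
    (hFDG : ∀ (t : ℝ) (k : ZMod N) (v : Polynomial ℝ), v.degree ≤ p →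
      (∫ ξ in (-1:ℝ)..1, (udot t k).eval ξ * v.eval ξ) + B (udot t k) v =
        - (∫ ξ in (-1:ℝ)..1, ((Polynomial.derivative (f t k)).eval ξ) * v.eval ξ)
          + ((f t k).eval 1 - F t k) * v.eval 1
          - ((f t k).eval (-1) - F t (k - 1)) * v.eval (-1)) :
    ∀ t : ℝ,
      HasDerivAt (fun s => ∑ k : ZMod N, ∫ ξ in (-1:ℝ)..1, (u s k).eval ξ) 0 t := by
  intro t
  have hmass (k : ZMod N) : ∫ ξ in (-1:ℝ)..1, (udot t k).eval ξ = F t (k - 1) - F t k :=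
    fdg_element_conservation _ _ _ _ _ (hBconst _ (hdegdot t k) 1)
      (hFDG t k (C 1) (degree_C_le.trans (by exact_mod_cast Nat.zero_le p)))
  have hsum : ∑ k : ZMod N, ∫ ξ in (-1:ℝ)..1, (udot t k).eval ξ = 0 := by
    simp_rw [hmass]
    rw [Finset.sum_sub_distrib, sub_eq_zero]
    exact Equiv.sum_comp (Equiv.subRight (1 : ZMod N)) (F t)
  rw [← hsum]
  exact HasDerivAt.fun_sum fun k _ =>
    hasDerivAt_integral_eval p (fun s => u s k) (udot t k) t (fun s => hdeg s k) (hdegdot t k)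
      (fun n => hderiv k n t)
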